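/- For any dimension d ≥ 1, any Bravais lattice Λ = Mℤ^d (M an invertible real d×d matrix), any vector u ∈ ℝ^d and any α > 0, one has θ_{Λ+u}(α) ≤ θ_Λ(α), with equality if and only if u ∈ Λ. Equivalently, for fixed Λ and α, the set of maximizers of u ↦ θ_{Λ+u}(α) is exactly Λ. -/

import Mathlib

/-!
Write `θ(u)` for the theta function at `α` and `θ₂(u)` for the one at `2α`. Let `c` run over
representatives of `Λ/2Λ`. The parallelogram law and the bijection `(c, a, b) ↦ (a + b + c, a - b)`
from `Λ/2Λ × Λ × Λ` to `Λ × Λ` turn the double series `θ(u + v) θ(u - v)` into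
`∑_c θ₂(c/2 + u) θ₂(c/2 + v)`, so that
`∑_c (θ₂(c/2) - θ₂(c/2 + u))² = θ(0)² - 2 θ(u)² + θ(2u) θ(0)`.

As the left-hand side is nonnegative, `4 (θ(u) - θ(0)) ≤ θ(2u) - θ(0)`, and since `θ` is bounded
its supremum can only be `θ(0)`. If `θ(u) = θ(0)`, then every square vanishes, so that
`θ₂(u) = θ₂(0)`: the equality persists along `α, 2α, 4α, …`. But for `u ∉ Λ` the theta function of
`Λ + u` at `2ⁿα` tends to `0`, while that of `Λ` is at least `1`.
-/

open scoped BigOperators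

/-- The translated lattice theta function
`θ_{MZ^d + u}(α) = Σ_{k∈ℤ^d} exp(−πα|Mk+u|²)`. -/
noncomputable def latTheta (d : ℕ) (M : Matrix (Fin d) (Fin d) ℝ)
    (u : Fin d → ℝ) (α : ℝ) : ℝ :=
  ∑' k : Fin d → ℤ,
    Real.exp (-Real.pi * α * ∑ i, (M.mulVec (fun j => (k j : ℝ)) i + u i) ^ 2)

open Filter Module Topology

section Halving

variable {G : Type*} [AddCommGroup G]

theorem modN_two_mk_eq_mk_iff {g h : G} :
    (Submodule.Quotient.mk g : ModN G 2) = Submodule.Quotient.mk h ↔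
      ∃ k : G, g - h = (2 : ℤ) • k :=
  (Submodule.Quotient.eq _).trans (exists_congr fun k ↦ by simp [eq_comm])

theorem bijective_add_add_out_sub [Module.IsTorsionFree ℤ G] :
    Function.Bijective fun p : ModN G 2 × G × G ↦
      (p.2.1 + p.2.2 + p.1.out, p.2.1 - p.2.2) := by
  constructor
  · rintro ⟨c, a, b⟩ ⟨c', a', b'⟩ h
    obtain ⟨hsum, hdiff⟩ := Prod.ext_iff.mp h
    dsimp only at hsum hdiff
    have hout : c.out - c'.out = (2 : ℤ) • (b' - b) := by
      linear_combination (norm := module) hsum - hdiff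
    obtain rfl : c = c' := by
      simpa only [Submodule.Quotient.mk_out] using modN_two_mk_eq_mk_iff.mpr ⟨_, hout⟩
    obtain rfl : b' = b := by
      rw [sub_self, eq_comm, smul_eq_zero_iff_right two_ne_zero] at hout
      exact sub_eq_zero.mp hout
    rw [sub_left_inj.mp hdiff]
  · rintro ⟨k, l⟩
    obtain ⟨b, hb⟩ := modN_two_mk_eq_mk_iff.mp
      (Submodule.Quotient.mk_out (Submodule.Quotient.mk (k - l) : ModN G 2)).symm
    refine ⟨⟨Submodule.Quotient.mk (k - l), l + b, b⟩, Prod.ext ?_ (add_sub_cancel_right l b)⟩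
    linear_combination (norm := module) -hb

end Halving

section Gaussian

variable {E : Type*} [NormedAddCommGroup E]

/-- The Gaussian `v ↦ exp (-π α ‖v‖²)`, the general term of a lattice theta function. -/
noncomputable def gaussian (α : ℝ) (v : E) : ℝ := Real.exp (-Real.pi * α * ‖v‖ ^ 2)

theorem gaussian_pos (α : ℝ) (v : E) : 0 < gaussian α v := Real.exp_pos _

theorem gaussian_zero (α : ℝ) : gaussian α (0 : E) = 1 := by simp [gaussian]

theorem gaussian_neg (α : ℝ) (v : E) : gaussian α (-v) = gaussian α v := by simp [gaussian]

theorem antitone_gaussian (v : E) : Antitone fun α ↦ gaussian α v := fun α α' h ↦ by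
  have : 0 ≤ Real.pi * ‖v‖ ^ 2 := by positivity
  exact Real.exp_le_exp.mpr (by nlinarith)

theorem gaussian_le_gaussian_div_four {α : ℝ} (hα : 0 ≤ α) {v w : E} (h : ‖v‖ ≤ 2 * ‖w‖) :
    gaussian α w ≤ gaussian (α / 4) v := by
  have hsq : ‖v‖ ^ 2 ≤ 4 * ‖w‖ ^ 2 := by nlinarith [norm_nonneg v]
  have : 0 ≤ Real.pi * α := by positivity
  exact Real.exp_le_exp.mpr (by nlinarith)

theorem tendsto_gaussian_atTop {v : E} (hv : v ≠ 0) :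
    Tendsto (fun α ↦ gaussian α v) atTop (𝓝 0) := by
  have hc : 0 < Real.pi * ‖v‖ ^ 2 := mul_pos Real.pi_pos (pow_pos (norm_pos_iff.mpr hv) 2)
  refine Real.tendsto_exp_comp_nhds_zero.mpr (tendsto_neg_atTop_atBot.comp
    (tendsto_id.atTop_mul_const hc) |>.congr fun α ↦ ?_)
  simp only [Function.comp_apply, id_eq]
  ring

theorem gaussian_add_mul_gaussian_sub [InnerProductSpace ℝ E] (α : ℝ) (v w : E) :
    gaussian α (v + w) * gaussian α (v - w) = gaussian (2 * α) v * gaussian (2 * α) w := by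
  simp only [gaussian, ← Real.exp_add]
  congr 1
  linear_combination -Real.pi * α * parallelogram_law_with_norm ℝ v w

end Gaussian

section Summability

variable {E : Type*} [NormedAddCommGroup E] (Λ : Submodule ℤ E) [DiscreteTopology Λ]

theorem tendsto_norm_coe_add_cofinite [ProperSpace E] (u : E) :
    Tendsto (fun p : Λ ↦ ‖(p : E) + u‖) cofinite atTop := by
  have hclosed : IsClosed (Λ : Set E) :=
    have : DiscreteTopology Λ.toAddSubgroup := ‹DiscreteTopology Λ›
    Λ.toAddSubgroup.isClosed_of_discrete
  have hcoe := hclosed.tendsto_coe_cofinite_of_isDiscrete DiscreteTopology.isDiscrete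
  exact tendsto_norm_cocompact_atTop.comp
    ((Homeomorph.addRight u).isClosedEmbedding.tendsto_cocompact.comp hcoe)

theorem summable_gaussian_coe_add [NormedSpace ℝ E] [FiniteDimensional ℝ E] {α : ℝ} (hα : 0 < α)
    (u : E) :
    Summable fun p : Λ ↦ gaussian α ((p : E) + u) := by
  obtain ⟨r, hr⟩ := exists_lt (-(Module.finrank ℤ Λ : ℝ))
  have hpow : Summable fun p : Λ ↦ ‖(p : E) + u‖ ^ r := by
    simpa only [sub_neg_eq_add] using ZLattice.summable_norm_sub_rpow Λ r hr (-u)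
  have hdecay := rexp_neg_quadratic_isLittleO_rpow_atTop
    (a := -Real.pi * α) (by nlinarith [Real.pi_pos]) 0 r
  simp only [zero_mul, add_zero] at hdecay
  exact summable_of_isBigO hpow
    (hdecay.comp_tendsto (tendsto_norm_coe_add_cofinite Λ u)).isBigO

end Summability

/-- The theta function `θ_{Λ + u}(α) = ∑_{p ∈ Λ} exp (-π α ‖p + u‖²)` of the translate by `u` of a
lattice `Λ`, which need not have full rank. -/
noncomputable def translatedTheta {E : Type*} [NormedAddCommGroup E] (Λ : Submodule ℤ E) (α : ℝ)
    (u : E) : ℝ :=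
  ∑' p : Λ, gaussian α ((p : E) + u)

namespace translatedTheta

section Symmetry

variable {E : Type*} [NormedAddCommGroup E] {Λ : Submodule ℤ E} (α : ℝ)

theorem apply_coe_add (m : Λ) (u : E) : translatedTheta Λ α (m + u) = translatedTheta Λ α u := by
  unfold translatedTheta
  rw [← (Equiv.addRight m).tsum_eq fun p : Λ ↦ gaussian α ((p : E) + u)]
  simp [add_assoc]

theorem apply_neg (u : E) : translatedTheta Λ α (-u) = translatedTheta Λ α u := by
  unfold translatedTheta
  rw [← (Equiv.neg Λ).tsum_eq]
  refine tsum_congr fun p ↦ ?_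
  rw [← gaussian_neg]
  simp [add_comm]

theorem span_range_basis {ι : Type*} [Fintype ι] [NormedSpace ℝ E] (b : Basis ι ℝ E) (u : E) :
    translatedTheta (Submodule.span ℤ (Set.range b)) α u =
      ∑' k : ι → ℤ, gaussian α (∑ i, k i • b i + u) := by
  unfold translatedTheta
  rw [← (b.restrictScalars ℤ).equivFun.symm.toEquiv.tsum_eq]
  simp [Basis.equivFun_symm_apply]

end Symmetry

section NormedSpace

variable {E : Type*} [NormedAddCommGroup E] [NormedSpace ℝ E] [FiniteDimensional ℝ E]
  {Λ : Submodule ℤ E} [DiscreteTopology Λ] {α : ℝ}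

theorem one_le_apply_zero (hα : 0 < α) : 1 ≤ translatedTheta Λ α 0 := by
  simpa [translatedTheta, gaussian_zero] using
    (summable_gaussian_coe_add Λ hα 0).le_tsum 0 fun _ _ ↦ (gaussian_pos _ _).le

theorem tendsto_atTop {u : E} (hu : u ∉ Λ) :
    Tendsto (fun α ↦ translatedTheta Λ α u) atTop (𝓝 0) := by
  rw [← tsum_zero (β := Λ)]
  refine tendsto_tsum_of_dominated_convergence (summable_gaussian_coe_add Λ one_pos u)
    (fun p ↦ tendsto_gaussian_atTop fun h ↦ hu ?_) ?_
  · rw [eq_neg_of_add_eq_zero_right h]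
    exact neg_mem p.2
  · filter_upwards [eventually_ge_atTop 1] with α hα p
    rw [Real.norm_of_nonneg (gaussian_pos _ _).le]
    exact antitone_gaussian _ hα

-- If `q + u` is the shortest vector of `Λ + u`, then `‖p‖ ≤ 2 ‖p + (q + u)‖` for all `p ∈ Λ`.
theorem le_apply_zero_div_four (hα : 0 < α) (u : E) :
    translatedTheta Λ α u ≤ translatedTheta Λ (α / 4) 0 := by
  obtain ⟨q, hq⟩ := (tendsto_norm_coe_add_cofinite Λ u).exists_forall_le
  rw [← apply_coe_add α q u]
  refine (summable_gaussian_coe_add Λ hα _).tsum_le_tsum (fun p ↦ ?_)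
    (summable_gaussian_coe_add Λ (by positivity) 0)
  have hshort : ‖(q : E) + u‖ ≤ ‖(p : E) + (q + u)‖ := by
    simpa [add_assoc] using hq (p + q)
  refine gaussian_le_gaussian_div_four hα.le ?_
  calc ‖(p : E) + 0‖ = ‖((p : E) + (q + u)) - (q + u)‖ := by rw [add_sub_cancel_right, add_zero]
    _ ≤ ‖(p : E) + (q + u)‖ + ‖(q : E) + u‖ := norm_sub_le _ _
    _ ≤ 2 * ‖(p : E) + (q + u)‖ := by linarith

theorem hasSum_mul (hα : 0 < α) (u v : E) :
    HasSum (fun q : Λ × Λ ↦ gaussian α ((q.1 : E) + u) * gaussian α ((q.2 : E) + v))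
      (translatedTheta Λ α u * translatedTheta Λ α v) := by
  have hu := summable_gaussian_coe_add Λ hα u
  have hv := summable_gaussian_coe_add Λ hα v
  have huv := hu.mul_of_nonneg hv (fun _ ↦ (gaussian_pos _ _).le) fun _ ↦ (gaussian_pos _ _).le
  exact (hu.hasSum.mul hv.hasSum huv :)

end NormedSpace

section InnerProductSpace

variable {E : Type*} [NormedAddCommGroup E] [InnerProductSpace ℝ E] [FiniteDimensional ℝ E]
  {Λ : Submodule ℤ E} [DiscreteTopology Λ] {α : ℝ}

theorem hasSum_duplication (hα : 0 < α) (u v : E) :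
    HasSum (fun c : ModN Λ 2 ↦ translatedTheta Λ (2 * α) ((2 : ℝ)⁻¹ • (c.out : E) + u) *
        translatedTheta Λ (2 * α) ((2 : ℝ)⁻¹ • (c.out : E) + v))
      (translatedTheta Λ α (u + v) * translatedTheta Λ α (u - v)) := by
  have : IsAddTorsionFree E := .of_isTorsionFree ℝ E
  have hpairs := (Equiv.ofBijective _ (bijective_add_add_out_sub (G := Λ))).hasSum_iff.mpr
    (hasSum_mul (Λ := Λ) hα (u + v) (u - v))
  have hterm (p : ModN Λ 2 × Λ × Λ) :
      gaussian (2 * α) ((p.2.1 : E) + ((2 : ℝ)⁻¹ • (p.1.out : E) + u)) *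
          gaussian (2 * α) ((p.2.2 : E) + ((2 : ℝ)⁻¹ • (p.1.out : E) + v)) =
        gaussian α (((p.2.1 + p.2.2 + p.1.out : Λ) : E) + (u + v)) *
          gaussian α (((p.2.1 - p.2.2 : Λ) : E) + (u - v)) := by
    rw [← gaussian_add_mul_gaussian_sub]
    congr 2 <;> push_cast <;> module
  have htriples := hpairs.congr_fun hterm
  exact htriples.prod_fiberwise fun c ↦ hasSum_mul (α := 2 * α) (by positivity)
    ((2 : ℝ)⁻¹ • (c.out : E) + u) ((2 : ℝ)⁻¹ • (c.out : E) + v)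

theorem hasSum_sq_sub (hα : 0 < α) (u : E) :
    HasSum (fun c : ModN Λ 2 ↦ (translatedTheta Λ (2 * α) ((2 : ℝ)⁻¹ • (c.out : E)) -
        translatedTheta Λ (2 * α) ((2 : ℝ)⁻¹ • (c.out : E) + u)) ^ 2)
      (translatedTheta Λ α 0 ^ 2 - 2 * translatedTheta Λ α u ^ 2 +
        translatedTheta Λ α ((2 : ℝ) • u) * translatedTheta Λ α 0) := by
  have h00 := hasSum_duplication (Λ := Λ) hα 0 0
  have h0u := hasSum_duplication (Λ := Λ) hα 0 u
  have huu := hasSum_duplication (Λ := Λ) hα u u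
  simp only [add_zero, zero_add, zero_sub, sub_self, apply_neg, ← two_smul ℝ u, ← sq] at h00 h0u huu
  refine ((h00.sub (h0u.mul_left 2)).add huu).congr_fun fun c ↦ ?_
  ring

theorem four_mul_sub_apply_zero_le (hα : 0 < α) (u : E) :
    4 * (translatedTheta Λ α u - translatedTheta Λ α 0) ≤
      translatedTheta Λ α ((2 : ℝ) • u) - translatedTheta Λ α 0 := by
  have hsq := (hasSum_sq_sub (Λ := Λ) hα u).nonneg fun _ ↦ sq_nonneg _
  have hpos := one_le_apply_zero (Λ := Λ) hα
  refine le_of_mul_le_mul_left ?_ (one_pos.trans_le hpos)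
  nlinarith [sq_nonneg (translatedTheta Λ α u - translatedTheta Λ α 0)]

theorem le_apply_zero (hα : 0 < α) (u : E) : translatedTheta Λ α u ≤ translatedTheta Λ α 0 := by
  have hbdd : BddAbove (Set.range (translatedTheta Λ α)) :=
    ⟨_, Set.forall_mem_range.mpr (le_apply_zero_div_four hα)⟩
  have hsup : ⨆ v, translatedTheta Λ α v ≤
      translatedTheta Λ α 0 + ((⨆ v, translatedTheta Λ α v) - translatedTheta Λ α 0) / 4 :=
    ciSup_le fun v ↦ by
      linarith [four_mul_sub_apply_zero_le (Λ := Λ) hα v, le_ciSup hbdd ((2 : ℝ) • v)]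
  linarith [le_ciSup hbdd u]

theorem eq_apply_zero_two_mul (hα : 0 < α) {u : E}
    (h : translatedTheta Λ α u = translatedTheta Λ α 0) :
    translatedTheta Λ (2 * α) u = translatedTheta Λ (2 * α) 0 := by
  have hterm := le_hasSum (hasSum_sq_sub (Λ := Λ) hα u) 0 fun _ _ ↦ sq_nonneg _
  obtain ⟨k, hk⟩ := modN_two_mk_eq_mk_iff.mp (Submodule.Quotient.mk_out (0 : ModN Λ 2))
  have hhalf : (2 : ℝ)⁻¹ • ((0 : ModN Λ 2).out : E) = k := by
    rw [sub_zero] at hk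
    rw [inv_smul_eq_iff₀ two_ne_zero, hk, ofNat_zsmul, two_nsmul, two_smul, Submodule.coe_add]
  rw [hhalf, apply_coe_add, ← add_zero (k : E), apply_coe_add, h] at hterm
  have hpos := one_le_apply_zero (Λ := Λ) hα
  have hdouble := le_apply_zero (Λ := Λ) hα ((2 : ℝ) • u)
  have hsq : (translatedTheta Λ (2 * α) 0 - translatedTheta Λ (2 * α) u) ^ 2 ≤ 0 := by
    nlinarith
  exact (sub_eq_zero.mp (sq_nonpos_iff _ |>.mp hsq)).symm

theorem mem_of_eq_apply_zero (hα : 0 < α) {u : E}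
    (h : translatedTheta Λ α u = translatedTheta Λ α 0) : u ∈ Λ := by
  by_contra hu
  have heq (n : ℕ) : translatedTheta Λ (2 ^ n * α) u = translatedTheta Λ (2 ^ n * α) 0 := by
    induction n with
    | zero => simpa using h
    | succ n ih =>
      rw [pow_succ', mul_assoc]
      exact eq_apply_zero_two_mul (by positivity) ih
  have hlim : Tendsto (fun n : ℕ ↦ translatedTheta Λ (2 ^ n * α) u) atTop (𝓝 0) :=
    (tendsto_atTop hu).comp
      ((tendsto_pow_atTop_atTop_of_one_lt one_lt_two).atTop_mul_const hα)
  have hone (n : ℕ) : 1 ≤ translatedTheta Λ (2 ^ n * α) u :=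
    (one_le_apply_zero (by positivity)).trans_eq (heq n).symm
  exact zero_lt_one.not_ge (ge_of_tendsto' hlim hone)

end InnerProductSpace

end translatedTheta

theorem translated_theta_le_theta_general {E : Type*} [NormedAddCommGroup E]
    [InnerProductSpace ℝ E] [FiniteDimensional ℝ E] (Λ : Submodule ℤ E) [DiscreteTopology Λ]
    (u : E) (α : ℝ) (hα : 0 < α) :
    translatedTheta Λ α u ≤ translatedTheta Λ α 0 ∧
      (translatedTheta Λ α u = translatedTheta Λ α 0 ↔ u ∈ Λ) := by
  refine ⟨translatedTheta.le_apply_zero hα u, translatedTheta.mem_of_eq_apply_zero hα, fun hu ↦ ?_⟩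
  simpa using translatedTheta.apply_coe_add α (⟨u, hu⟩ : Λ) 0

section ColumnBasis

variable {ι : Type*} [Fintype ι] [DecidableEq ι] (M : Matrix ι ι ℝ) (hM : IsUnit M.det)

/-- The columns of an invertible matrix `M` as a basis of Euclidean space; its integral span is the
lattice `Mℤ^d`. -/
noncomputable def columnBasis : Basis ι ℝ (EuclideanSpace ℝ ι) :=
  ((Pi.basisFun ℝ ι).map (M.toLinearEquiv (Pi.basisFun ℝ ι) hM)).map
    (WithLp.linearEquiv 2 ℝ (ι → ℝ)).symm

theorem sum_smul_columnBasis (k : ι → ℤ) :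
    ∑ j, k j • columnBasis M hM j = WithLp.toLp 2 (M.mulVec fun j ↦ (k j : ℝ)) := by
  ext i
  simp [columnBasis, Matrix.toLin_eq_toLin', Matrix.mulVec, dotProduct, mul_comm]

theorem toLp_mem_span_columnBasis_iff (u : ι → ℝ) :
    WithLp.toLp 2 u ∈ Submodule.span ℤ (Set.range (columnBasis M hM)) ↔
      ∃ k : ι → ℤ, u = M.mulVec fun j ↦ (k j : ℝ) := by
  simp [Submodule.mem_span_range_iff_exists_fun, sum_smul_columnBasis, eq_comm]

end ColumnBasis

theorem latTheta_eq_translatedTheta {d : ℕ} (M : Matrix (Fin d) (Fin d) ℝ) (hM : IsUnit M.det)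
    (u : Fin d → ℝ) (α : ℝ) :
    latTheta d M u α =
      translatedTheta (Submodule.span ℤ (Set.range (columnBasis M hM))) α (WithLp.toLp 2 u) := by
  rw [translatedTheta.span_range_basis]
  simp [sum_smul_columnBasis, gaussian, latTheta, EuclideanSpace.norm_sq_eq]

/-- `θ_{Λ+u}(α) ≤ θ_Λ(α)` with equality iff `u ∈ Λ`. -/
theorem translated_theta_le_theta
    (d : ℕ) (hd : 1 ≤ d)
    (M : Matrix (Fin d) (Fin d) ℝ) (hM : IsUnit M.det)
    (u : Fin d → ℝ) (α : ℝ) (hα : 0 < α) :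
    latTheta d M u α ≤ latTheta d M 0 α ∧
    (latTheta d M u α = latTheta d M 0 α ↔
      ∃ k : Fin d → ℤ, u = M.mulVec (fun j => (k j : ℝ))) := by
  rw [latTheta_eq_translatedTheta M hM, latTheta_eq_translatedTheta M hM 0,
    ← toLp_mem_span_columnBasis_iff M hM]
  exact translated_theta_le_theta_general _ _ α hα
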